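/- arXiv:2302.06334 — 2 statements merged into one kernel-verified Lean document; each statement's English description precedes it below -/
import Mathlib

section
/- Let δ : ]0,∞[ → ℝ be continuously differentiable, nonnegative and bounded. Then for every r_A, r_B > 0 and every T > 0 there exists a unique solution r : [-T,0] → ]0,∞[ of r̈ + δ(r)ṙ = -1/r² satisfying r(-T) = r_A and r(0) = r_B. -/
open Set

/-- Positive solutions of the damped one-dimensional Kepler equation
`r̈ + δ(r)ṙ = -1/r²` on a set `S` of times. -/
def Kepler1DOn (δ : ℝ → ℝ) (S : Set ℝ) (r r' : ℝ → ℝ) : Prop :=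
  (∀ t ∈ S, 0 < r t) ∧
  (∀ t ∈ S, HasDerivWithinAt r (r' t) S t) ∧
  (∀ t ∈ S, HasDerivWithinAt r' (-(δ (r t)) * r' t - 1 / (r t) ^ 2) S t)

/-!
Let `Δ` be a primitive of `δ`. In the Liénard variables `r` and `p = ṙ + Δ(r)` the equation reads
`ṙ = p - Δ(r)`, `ṗ = -1/r²`, in which `δ` no longer occurs.

Two curves of such a system with the same `Δ` obey a comparison principle. If `r > q` on an
interval at whose ends `r = q`, then the damping terms cancel at both ends, so the difference of
the momenta is the derivative of `r - q` there: it is `≥ 0` at the left end and `≤ 0` at the right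
end. Hence it cannot be strictly increasing in between. Since `-1/r²` is increasing in `r`, this
gives uniqueness. Comparing with the constant `min r_A r_B` bounds solutions from below, and
comparing with a decreasing, sufficiently concave curve bounds them from above.

For existence, replace `Δ` and `-1/r²` outside the interval given by these bounds by constants.
The resulting system is solvable by shooting, because the bounded force and the bounded `Δ` change
`r` by a bounded amount compared with uniform motion at speed `p(-T)`. The bounds then show that
the solution found this way never leaves the interval.
-/

section LipschitzVectorField

open scoped NNReal

variable {E : Type*} [NormedAddCommGroup E] [NormedSpace ℝ E] {f : E → E} {K : ℝ≥0} {a b : ℝ}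

theorem exists_integralCurve_Icc_of_lipschitzWith_of_norm_le [CompleteSpace E]
    (hf : LipschitzWith K f) {L : ℝ} (hL : ∀ x, ‖f x‖ ≤ L) (hab : a ≤ b) (x : E) :
    ∃ z : ℝ → E, z a = x ∧ ∀ t ∈ Icc a b, HasDerivWithinAt z (f (z t)) (Icc a b) t := by
  lift L to ℝ≥0 using (norm_nonneg _).trans (hL x)
  lift b - a to ℝ≥0 using sub_nonneg.2 hab with T hT
  have hPL : IsPicardLindelof (fun _ ↦ f) (⟨a, left_mem_Icc.2 hab⟩ : Icc a b) x (L * T) 0 L K := by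
    refine .of_time_independent (fun y _ ↦ hL y) hf.lipschitzOnWith ?_
    simp [← hT]
  exact hPL.exists_eq_forall_mem_Icc_hasDerivWithinAt₀

theorem continuous_integralCurve_apply_of_lipschitzWith (hf : LipschitzWith K f) {z : E → ℝ → E}
    (hz₀ : ∀ x, z x a = x)
    (hz : ∀ x, ∀ t ∈ Icc a b, HasDerivWithinAt (z x) (f (z x t)) (Icc a b) t)
    {t : ℝ} (ht : t ∈ Icc a b) : Continuous fun x ↦ z x t := by
  have hcont (x : E) : ContinuousOn (z x) (Icc a b) := HasDerivWithinAt.continuousOn (hz x)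
  have hright (x : E) : ∀ s ∈ Ico a b, HasDerivWithinAt (z x) (f (z x s)) (Ici s) s :=
    fun s hs ↦ (hz x s (Ico_subset_Icc_self hs)).mono_of_mem_nhdsWithin (Icc_mem_nhdsGE_of_mem hs)
  refine (LipschitzWith.of_dist_le_mul (K := (Real.exp (K * (t - a))).toNNReal)
    fun x y ↦ ?_).continuous
  rw [Real.coe_toNNReal _ (Real.exp_nonneg _), mul_comm]
  refine dist_le_of_trajectories_ODE (v := fun _ ↦ f) (fun _ ↦ hf)
    (hcont x) (hright x) (hcont y) (hright y) ?_ t ht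
  rw [hz₀, hz₀]

end LipschitzVectorField

section Calculus

theorem exists_hasDerivAt_of_continuousOn_Ioi {f : ℝ → ℝ} {a : ℝ} (hf : ContinuousOn f (Ioi a)) :
    ∃ F : ℝ → ℝ, ∀ x ∈ Ioi a, HasDerivAt F (f x) x := by
  refine ⟨fun x ↦ ∫ y in (a + 1)..x, f y, fun x hx ↦ ?_⟩
  have hsub : uIcc (a + 1) x ⊆ Ioi a := fun y hy ↦ (lt_min (lt_add_one a) hx).trans_le hy.1
  exact intervalIntegral.integral_hasDerivAt_right (hf.mono hsub).intervalIntegrable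
    (hf.stronglyMeasurableAtFilter isOpen_Ioi x hx) (hf.continuousAt (Ioi_mem_nhds hx))

theorem exists_lipschitzWith_IccExtend_and_abs_le {f f' : ℝ → ℝ} {a b : ℝ} (hab : a ≤ b)
    (hf : ∀ x ∈ Icc a b, HasDerivWithinAt f (f' x) (Icc a b) x)
    (hf' : ContinuousOn f' (Icc a b)) :
    ∃ K B, LipschitzWith K (IccExtend hab ((Icc a b).domRestrict f)) ∧
      ∀ x, |IccExtend hab ((Icc a b).domRestrict f) x| ≤ B := by
  obtain ⟨B, hB⟩ := isCompact_Icc.exists_bound_of_continuousOn (HasDerivWithinAt.continuousOn hf)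
  obtain ⟨C, hC⟩ := isCompact_Icc.exists_bound_of_continuousOn hf'
  have hlip : LipschitzOnWith C.toNNReal f (Icc a b) :=
    (convex_Icc a b).lipschitzOnWith_of_nnnorm_hasDerivWithin_le hf
      fun x hx ↦ NNReal.le_toNNReal_of_coe_le (hC x hx)
  exact ⟨_, B, hlip.to_restrict.comp (LipschitzWith.projIcc hab),
    fun x ↦ hB _ (projIcc a b hab x).2⟩

theorem sub_mul_nonneg_of_isMinOn_of_hasDerivWithinAt {f : ℝ → ℝ} {f' x y : ℝ} {s : Set ℝ}
    (hs : Convex ℝ s) (hmin : IsMinOn f s x) (hf : HasDerivWithinAt f f' s x)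
    (hx : x ∈ s) (hy : y ∈ s) : 0 ≤ (y - x) * f' := by
  simpa using hmin.localize.hasFDerivWithinAt_nonneg hf.hasFDerivWithinAt
    (sub_mem_posTangentConeAt_of_segment_subset (hs.segment_subset hx hy))

variable {w : ℝ → ℝ} {a b t : ℝ}

theorem exists_last_zero_of_nonpos_of_pos (hw : ContinuousOn w (Icc a t)) (hat : a ≤ t)
    (ha : w a ≤ 0) (ht : 0 < w t) : ∃ s ∈ Ico a t, w s = 0 ∧ ∀ x ∈ Ioc s t, 0 < w x := by
  have hcompact : IsCompact (Icc a t ∩ w ⁻¹' Iic 0) :=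
    isCompact_Icc.of_isClosed_subset (hw.preimage_isClosed_of_isClosed isClosed_Icc isClosed_Iic)
      inter_subset_left
  obtain ⟨s, ⟨hs, hws⟩, hmax⟩ := hcompact.exists_isGreatest ⟨a, left_mem_Icc.2 hat, ha⟩
  have hpos : ∀ x ∈ Ioc s t, 0 < w x := fun x hx ↦
    lt_of_not_ge fun hwx ↦ hx.1.not_ge (hmax ⟨⟨hs.1.trans hx.1.le, hx.2⟩, hwx⟩)
  obtain ⟨x, hx, hwx⟩ : ∃ x ∈ Icc s t, w x = 0 :=
    intermediate_value_Icc hs.2 (hw.mono (Icc_subset_Icc_left hs.1)) ⟨hws, ht.le⟩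
  obtain rfl : x = s := le_antisymm (hmax ⟨⟨hs.1.trans hx.1, hx.2⟩, hwx.le⟩) hx.1
  have hxt : x ≠ t := by rintro rfl; exact ht.ne' hwx
  exact ⟨x, ⟨hs.1, lt_of_le_of_ne hs.2 hxt⟩, hwx, hpos⟩

theorem exists_zeros_forall_Ioo_pos (hw : ContinuousOn w (Icc a b)) (ha : w a ≤ 0) (hb : w b ≤ 0)
    (ht : t ∈ Icc a b) (hwt : 0 < w t) :
    ∃ c d, a ≤ c ∧ c < d ∧ d ≤ b ∧ w c = 0 ∧ w d = 0 ∧ ∀ x ∈ Ioo c d, 0 < w x := by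
  obtain ⟨c, hc, hwc, hposc⟩ :=
    exists_last_zero_of_nonpos_of_pos (hw.mono (Icc_subset_Icc_right ht.2)) ht.1 ha hwt
  have hw_neg : ContinuousOn (fun x ↦ w (-x)) (Icc (-b) (-t)) :=
    hw.comp continuousOn_neg fun x hx ↦ ⟨ht.1.trans (le_neg_of_le_neg hx.2), neg_le.1 hx.1⟩
  obtain ⟨d, hd, hwd, hposd⟩ := exists_last_zero_of_nonpos_of_pos hw_neg (neg_le_neg ht.2)
    (by simpa using hb) (by simpa using hwt)
  refine ⟨c, -d, hc.1, hc.2.trans (lt_neg_of_lt_neg hd.2), neg_le.1 hd.1, hwc, hwd, fun x hx ↦ ?_⟩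
  rcases le_total x t with hxt | htx
  · exact hposc x ⟨hx.1, hxt⟩
  · simpa using hposd (-x) ⟨lt_neg_of_lt_neg hx.2, neg_le_neg htx⟩

theorem exists_excursion_of_hasDerivWithinAt {w' : ℝ → ℝ}
    (hw : ∀ t ∈ Icc a b, HasDerivWithinAt w (w' t) (Icc a b) t) (ha : w a ≤ 0) (hb : w b ≤ 0)
    (ht : t ∈ Icc a b) (hwt : 0 < w t) :
    ∃ c d, c < d ∧ Icc c d ⊆ Icc a b ∧ w c = 0 ∧ w d = 0 ∧ (∀ x ∈ Ioo c d, 0 < w x) ∧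
      0 ≤ w' c ∧ w' d ≤ 0 := by
  obtain ⟨c, d, hac, hcd, hdb, hwc, hwd, hpos⟩ :=
    exists_zeros_forall_Ioo_pos (HasDerivWithinAt.continuousOn hw) ha hb ht hwt
  have hsub : Icc c d ⊆ Icc a b := Icc_subset_Icc hac hdb
  have hc : c ∈ Icc c d := left_mem_Icc.2 hcd.le
  have hd : d ∈ Icc c d := right_mem_Icc.2 hcd.le
  have hnonneg : ∀ x ∈ Icc c d, 0 ≤ w x := fun x hx ↦ by
    rcases eq_endpoints_or_mem_Ioo_of_mem_Icc hx with rfl | rfl | h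
    exacts [hwc.ge, hwd.ge, (hpos x h).le]
  have hc_deriv : 0 ≤ (d - c) * w' c :=
    sub_mul_nonneg_of_isMinOn_of_hasDerivWithinAt (convex_Icc c d)
      (fun x hx ↦ hwc.trans_le (hnonneg x hx)) ((hw c (hsub hc)).mono hsub) hc hd
  have hd_deriv : 0 ≤ (c - d) * w' d :=
    sub_mul_nonneg_of_isMinOn_of_hasDerivWithinAt (convex_Icc c d)
      (fun x hx ↦ hwd.trans_le (hnonneg x hx)) ((hw d (hsub hd)).mono hsub) hd hc
  exact ⟨c, d, hcd, hsub, hwc, hwd, hpos, nonneg_of_mul_nonneg_right hc_deriv (sub_pos.2 hcd),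
    nonpos_of_mul_nonneg_right hd_deriv (sub_neg.2 hcd)⟩

end Calculus

/-- Solutions on `S` of the forced Liénard equation `r̈ + (F(r))˙ = φ(t)`, written as a first-order
system for `r` and the momentum `p = ṙ + F(r)`; this asks no regularity of `F`. -/
def IsLienardOn (F φ : ℝ → ℝ) (S : Set ℝ) (r p : ℝ → ℝ) : Prop :=
  ∀ t ∈ S, HasDerivWithinAt r (p t - F (r t)) S t ∧ HasDerivWithinAt p (φ t) S t

namespace IsLienardOn

variable {F φ ψ r p q y : ℝ → ℝ} {a b C G : ℝ}

theorem le_of_forcing_lt (hr : IsLienardOn F φ (Icc a b) r p) (hq : IsLienardOn F ψ (Icc a b) q y)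
    (hforce : ∀ t ∈ Icc a b, q t < r t → ψ t < φ t) (ha : r a ≤ q a) (hb : r b ≤ q b) :
    ∀ t ∈ Icc a b, r t ≤ q t := by
  by_contra! ⟨t, ht, hlt⟩
  obtain ⟨c, d, hcd, hsub, hwc, hwd, hpos, hc_deriv, hd_deriv⟩ :=
    exists_excursion_of_hasDerivWithinAt (fun t ht ↦ (hr t ht).1.sub (hq t ht).1)
      (sub_nonpos.2 ha) (sub_nonpos.2 hb) ht (sub_pos.2 hlt)
  have hmono : StrictMonoOn (fun t ↦ p t - y t) (Icc c d) := by
    have hderiv : ∀ t ∈ Icc c d, HasDerivWithinAt (fun t ↦ p t - y t) (φ t - ψ t) (Icc c d) t :=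
      fun t ht ↦ ((hr t (hsub ht)).2.sub (hq t (hsub ht)).2).mono hsub
    refine strictMonoOn_of_hasDerivWithinAt_pos (convex_Icc c d)
      (HasDerivWithinAt.continuousOn hderiv)
      (fun t ht ↦ (hderiv t (interior_subset ht)).mono interior_subset) fun t ht ↦ ?_
    have hwt := hpos t (interior_Icc (a := c) ▸ ht)
    exact sub_pos.2 (hforce t (hsub (interior_subset ht)) (sub_pos.1 hwt))
  have hlt_momentum : p c - y c < p d - y d :=
    hmono (left_mem_Icc.2 hcd.le) (right_mem_Icc.2 hcd.le) hcd
  rw [sub_eq_zero.1 hwc] at hc_deriv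
  rw [sub_eq_zero.1 hwd] at hd_deriv
  linarith

theorem le_of_forcing_neg (hr : IsLienardOn F φ (Icc a b) r p) (hφ : ∀ t ∈ Icc a b, φ t < 0)
    {m : ℝ} (ha : m ≤ r a) (hb : m ≤ r b) : ∀ t ∈ Icc a b, m ≤ r t := by
  have hconst : IsLienardOn F (fun _ ↦ 0) (Icc a b) (fun _ ↦ m) (fun _ ↦ F m) := fun t _ ↦ by
    simpa only [sub_self] using And.intro (hasDerivWithinAt_const t _ m)
      (hasDerivWithinAt_const t _ (F m))
  exact hconst.le_of_forcing_lt hr (fun t ht _ ↦ hφ t ht) ha hb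

theorem abs_momentum_sub_le (hr : IsLienardOn F φ (Icc a b) r p) (hφ : ∀ t ∈ Icc a b, |φ t| ≤ G) :
    ∀ t ∈ Icc a b, |p t - p a| ≤ G * (t - a) :=
  norm_image_sub_le_of_norm_deriv_le_segment' (fun t ht ↦ (hr t ht).2)
    fun t ht ↦ hφ t (Ico_subset_Icc_self ht)

theorem abs_position_sub_le (hr : IsLienardOn F φ (Icc a b) r p) (hφ : ∀ t ∈ Icc a b, |φ t| ≤ G)
    (hF : ∀ x, |F x| ≤ C) (hab : a ≤ b) :
    |r b - (r a + p a * (b - a))| ≤ (G * (b - a) + C) * (b - a) := by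
  have ha := left_mem_Icc.2 hab
  have hG : 0 ≤ G := (abs_nonneg _).trans (hφ a ha)
  have hderiv : ∀ t ∈ Icc a b, HasDerivWithinAt (fun t ↦ r t - p a * (t - a))
      (p t - F (r t) - p a) (Icc a b) t := fun t ht ↦
    ((hr t ht).1.sub (((hasDerivWithinAt_id t _).sub_const a).const_mul (p a))).congr_deriv
      (by rw [mul_one])
  have hbound : ∀ t ∈ Ico a b, ‖p t - F (r t) - p a‖ ≤ G * (b - a) + C := fun t ht ↦ calc
    ‖p t - F (r t) - p a‖ = |(p t - p a) - F (r t)| := by rw [Real.norm_eq_abs]; ring_nf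
    _ ≤ |p t - p a| + |F (r t)| := abs_sub _ _
    _ ≤ G * (t - a) + C :=
      add_le_add (hr.abs_momentum_sub_le hφ t (Ico_subset_Icc_self ht)) (hF _)
    _ ≤ G * (b - a) + C := by gcongr; exact ht.2.le
  have := norm_image_sub_le_of_norm_deriv_le_segment' hderiv hbound b (right_mem_Icc.2 hab)
  rw [Real.norm_eq_abs] at this
  convert this using 2
  ring

theorem of_hasDerivWithinAt {S : Set ℝ} {f r' r'' : ℝ → ℝ}
    (hr : ∀ t ∈ S, HasDerivWithinAt r (r' t) S t) (hr' : ∀ t ∈ S, HasDerivWithinAt r' (r'' t) S t)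
    (hF : ∀ t ∈ S, HasDerivAt F (f (r t)) (r t)) :
    IsLienardOn F (fun t ↦ r'' t + f (r t) * r' t) S r (fun t ↦ r' t + F (r t)) := fun t ht ↦
  ⟨by simpa only [add_sub_cancel_right] using hr t ht,
    (hr' t ht).add ((hF t ht).comp_hasDerivWithinAt t (hr t ht))⟩

theorem hasDerivWithinAt_velocity {S : Set ℝ} {f : ℝ → ℝ} (hr : IsLienardOn F φ S r p)
    (hF : ∀ t ∈ S, HasDerivAt F (f (r t)) (r t)) :
    ∀ t ∈ S, HasDerivWithinAt (fun t ↦ p t - F (r t)) (φ t - f (r t) * (p t - F (r t))) S t :=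
  fun t ht ↦ (hr t ht).2.sub ((hF t ht).comp_hasDerivWithinAt t (hr t ht).1)

theorem congr {S : Set ℝ} {F₁ φ₁ : ℝ → ℝ} (hr : IsLienardOn F φ S r p)
    (hF : ∀ t ∈ S, F (r t) = F₁ (r t)) (hφ : ∀ t ∈ S, φ t = φ₁ t) : IsLienardOn F₁ φ₁ S r p :=
  fun t ht ↦ hF t ht ▸ hφ t ht ▸ hr t ht

theorem le_of_supersolution {F₁ f h h' h'' : ℝ → ℝ} (hr : IsLienardOn F₁ φ (Icc a b) r p)
    (hh : ∀ t ∈ Icc a b, HasDerivWithinAt h (h' t) (Icc a b) t)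
    (hh' : ∀ t ∈ Icc a b, HasDerivWithinAt h' (h'' t) (Icc a b) t)
    (hF : ∀ t ∈ Icc a b, HasDerivAt F (f (h t)) (h t)) (hF₁ : ∀ t ∈ Icc a b, F (h t) = F₁ (h t))
    (hsuper : ∀ t ∈ Icc a b, h'' t + f (h t) * h' t < φ t) (ha : r a ≤ h a) (hb : r b ≤ h b) :
    ∀ t ∈ Icc a b, r t ≤ h t :=
  hr.le_of_forcing_lt ((of_hasDerivWithinAt hh hh' hF).congr hF₁ fun _ _ ↦ rfl)
    (fun t ht _ ↦ hsuper t ht) ha hb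

end IsLienardOn

section Shooting

open scoped NNReal

variable {F g : ℝ → ℝ} {KF Kg : ℝ≥0} {C G a b : ℝ}

theorem exists_isLienardOn_initial (hF : LipschitzWith KF F) (hg : LipschitzWith Kg g)
    (hFC : ∀ x, |F x| ≤ C) (hgG : ∀ x, |g x| ≤ G) (hab : a ≤ b) (x v : ℝ) :
    ∃ r p : ℝ → ℝ, IsLienardOn F (fun t ↦ g (r t)) (Icc a b) r p ∧ r a = x ∧ p a = v := by
  have hG : 0 ≤ G := (abs_nonneg _).trans (hgG 0)
  -- The momentum stays within `G * (b - a)` of `v`, so clipping it there makes the vector field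
  -- bounded without changing the solution.
  have hm : v - G * (b - a) ≤ v + G * (b - a) := by
    have := mul_nonneg hG (sub_nonneg.2 hab)
    linarith
  set c : ℝ → ℝ := fun p ↦ projIcc (v - G * (b - a)) (v + G * (b - a)) hm p with hc
  have hc_le (p : ℝ) : |c p| ≤ |v| + G * (b - a) := by
    have hmem : c p ∈ Icc (v - G * (b - a)) (v + G * (b - a)) := (projIcc _ _ hm p).2
    refine abs_le.2 ⟨?_, ?_⟩ <;> linarith [hmem.1, hmem.2, neg_abs_le v, le_abs_self v]
  have hc_lip : LipschitzWith (1 * 1) c := (LipschitzWith.subtype_val _).comp (.projIcc hm)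
  have hfield := ((hc_lip.comp LipschitzWith.prod_snd).sub (hF.comp LipschitzWith.prod_fst)).prodMk
    (hg.comp LipschitzWith.prod_fst)
  obtain ⟨z, hza, hz⟩ := exists_integralCurve_Icc_of_lipschitzWith_of_norm_le hfield
    (L := max (|v| + G * (b - a) + C) G)
    (fun z ↦ max_le_max ((abs_sub _ _).trans (add_le_add (hc_le _) (hFC _))) (hgG _)) hab (x, v)
  have hp : ∀ t ∈ Icc a b, HasDerivWithinAt (fun t ↦ (z t).2) (g (z t).1) (Icc a b) t :=
    fun t ht ↦ (hz t ht).snd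
  have hclip : ∀ t ∈ Icc a b, c (z t).2 = (z t).2 := fun t ht ↦ by
    have hdist := norm_image_sub_le_of_norm_deriv_le_segment' hp (fun s _ ↦ hgG _) t ht
    rw [hza, Real.norm_eq_abs, abs_le] at hdist
    have hGt : G * (t - a) ≤ G * (b - a) := by gcongr; exact ht.2
    simp only [hc]
    rw [projIcc_of_mem hm ⟨by linarith, by linarith⟩]
  refine ⟨fun t ↦ (z t).1, fun t ↦ (z t).2, fun t ht ↦ ⟨?_, hp t ht⟩,
    congrArg Prod.fst hza, congrArg Prod.snd hza⟩
  have hr : HasDerivWithinAt (fun t ↦ (z t).1) (c (z t).2 - F (z t).1) (Icc a b) t := (hz t ht).fst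
  rwa [hclip t ht] at hr

theorem exists_isLienardOn_boundary (hF : LipschitzWith KF F) (hg : LipschitzWith Kg g)
    (hFC : ∀ x, |F x| ≤ C) (hgG : ∀ x, |g x| ≤ G) (hab : a < b) (xa xb : ℝ) :
    ∃ r p : ℝ → ℝ, IsLienardOn F (fun t ↦ g (r t)) (Icc a b) r p ∧ r a = xa ∧ r b = xb := by
  choose r p hrp hra hpa using exists_isLienardOn_initial hF hg hFC hgG hab.le
  have hfield : LipschitzWith _ fun z : ℝ × ℝ ↦ (z.2 - F z.1, g z.1) :=
    (LipschitzWith.prod_snd.sub (hF.comp LipschitzWith.prod_fst)).prodMk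
      (hg.comp LipschitzWith.prod_fst)
  have hcont : Continuous fun v ↦ r xa v b := by
    have hflow : Continuous fun z : ℝ × ℝ ↦ (r z.1 z.2 b, p z.1 z.2 b) :=
      continuous_integralCurve_apply_of_lipschitzWith hfield
        (z := fun z t ↦ (r z.1 z.2 t, p z.1 z.2 t)) (fun z ↦ by simp only [hra, hpa])
        (fun z t ht ↦ (hrp z.1 z.2 t ht).1.prodMk (hrp z.1 z.2 t ht).2) (right_mem_Icc.2 hab.le)
    exact hflow.fst.comp (Continuous.prodMk_right xa)
  have hab' : 0 < b - a := sub_pos.2 hab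
  have hend (v : ℝ) : |r xa v b - (xa + v * (b - a))| ≤ (G * (b - a) + C) * (b - a) := by
    simpa only [hra, hpa] using
      (hrp xa v).abs_position_sub_le (fun t _ ↦ hgG _) hFC hab.le
  have hmean : (xb - xa) / (b - a) * (b - a) = xb - xa := div_mul_cancel₀ _ hab'.ne'
  obtain ⟨v, hv⟩ : xb ∈ range fun v ↦ r xa v b := by
    refine mem_range_of_exists_le_of_exists_ge hcont
      ⟨(xb - xa) / (b - a) - (G * (b - a) + C), ?_⟩ ⟨(xb - xa) / (b - a) + (G * (b - a) + C), ?_⟩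
    · linarith [(abs_le.1 (hend ((xb - xa) / (b - a) - (G * (b - a) + C)))).2]
    · linarith [(abs_le.1 (hend ((xb - xa) / (b - a) + (G * (b - a) + C)))).1]
  exact ⟨r xa v, p xa v, hrp xa v, hra xa v, hv⟩

end Shooting

section Existence

theorem exists_antitone_supersolution (D k m a b : ℝ) :
    ∃ (h h' h'' : ℝ → ℝ) (M : ℝ), ∀ t ∈ Icc a b, HasDerivAt h (h' t) t ∧ HasDerivAt h' (h'' t) t ∧
      h' t ≤ 0 ∧ h'' t + D * h' t < -k ∧ m ≤ h t ∧ h t ≤ M := by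
  -- `h t = M - c * exp (l * (t - a))` has `h'' + D h' = -c l (l + D) exp (l (t - a))`, where
  -- `l ≥ 1`, `l + D ≥ 1` and `c > k`; the constant `M` makes `h b = m`.
  set l := 1 + |D|
  set c := |k| + 1
  set M := m + c * Real.exp (l * (b - a))
  have hl : 1 ≤ l := le_add_of_nonneg_right (abs_nonneg D)
  have hlD : 1 ≤ l + D := by linarith [neg_abs_le D]
  have hc : 0 < c := by positivity
  have hexp (t : ℝ) :
      HasDerivAt (fun t ↦ Real.exp (l * (t - a))) (l * Real.exp (l * (t - a))) t := by
    simpa [mul_comm] using (((hasDerivAt_id t).sub_const a).const_mul l).exp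
  refine ⟨fun t ↦ M - c * Real.exp (l * (t - a)), fun t ↦ -(c * (l * Real.exp (l * (t - a)))),
    fun t ↦ -(c * (l * (l * Real.exp (l * (t - a))))), M, fun t ht ↦ ⟨?_, ?_, ?_, ?_, ?_, ?_⟩⟩
  · exact ((hexp t).const_mul c).const_sub M
  · exact (((hexp t).const_mul l).const_mul c).neg
  · exact neg_nonpos.2 (by positivity)
  · have hone : 1 ≤ Real.exp (l * (t - a)) :=
      Real.one_le_exp (mul_nonneg (by positivity) (sub_nonneg.2 ht.1))
    have hfactor : 1 ≤ l * (l + D) * Real.exp (l * (t - a)) :=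
      one_le_mul_of_one_le_of_one_le (one_le_mul_of_one_le_of_one_le hl hlD) hone
    have hlt : k < c * (l * (l + D) * Real.exp (l * (t - a))) :=
      ((le_abs_self k).trans_lt (lt_add_one _)).trans_le (le_mul_of_one_le_right hc.le hfactor)
    linarith
  · have : c * Real.exp (l * (t - a)) ≤ c * Real.exp (l * (b - a)) := by gcongr; exact ht.2
    linarith
  · exact sub_le_self _ (by positivity)

variable {F f g g' : ℝ → ℝ} {a b m D k xa xb : ℝ}

theorem exists_isLienardOn_boundary_of_forcing_neg (hF : ∀ x ∈ Ici m, HasDerivAt F (f x) x)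
    (hf : ContinuousOn f (Ici m)) (hfD : ∀ x ∈ Ici m, D ≤ f x)
    (hg : ∀ x ∈ Ici m, HasDerivAt g (g' x) x) (hg' : ContinuousOn g' (Ici m))
    (hg_neg : ∀ x ∈ Ici m, g x < 0) (hgk : ∀ x ∈ Ici m, -k ≤ g x)
    (hab : a < b) (hxa : m ≤ xa) (hxb : m ≤ xb) :
    ∃ r p : ℝ → ℝ, IsLienardOn F (fun t ↦ g (r t)) (Icc a b) r p ∧
      (∀ t ∈ Icc a b, m ≤ r t) ∧ r a = xa ∧ r b = xb := by
  obtain ⟨h, h', h'', M, hh⟩ := exists_antitone_supersolution D k (max xa xb) a b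
  choose! hh_deriv hh'_deriv hh'_nonpos hh_super hh_ge hh_le using hh
  have hh_mem : ∀ t ∈ Icc a b, h t ∈ Icc m M := fun t ht ↦
    ⟨hxa.trans ((le_max_left _ _).trans (hh_ge t ht)), hh_le t ht⟩
  have hmM : m ≤ M := nonempty_Icc.1 ⟨_, hh_mem a (left_mem_Icc.2 hab.le)⟩
  have hsub : Icc m M ⊆ Ici m := Icc_subset_Ici_self
  obtain ⟨KF, C, hF_lip, hFC⟩ := exists_lipschitzWith_IccExtend_and_abs_le hmM
    (fun x hx ↦ (hF x hx.1).hasDerivWithinAt) (hf.mono hsub)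
  obtain ⟨Kg, G, hg_lip, hgG⟩ := exists_lipschitzWith_IccExtend_and_abs_le hmM
    (fun x hx ↦ (hg x hx.1).hasDerivWithinAt) (hg'.mono hsub)
  obtain ⟨r, p, hr, hra, hrb⟩ := exists_isLienardOn_boundary hF_lip hg_lip hFC hgG hab xa xb
  have hr_ge : ∀ t ∈ Icc a b, m ≤ r t := hr.le_of_forcing_neg
    (fun t _ ↦ hg_neg _ (hsub (projIcc m M hmM (r t)).2)) (hra ▸ hxa) (hrb ▸ hxb)
  have hr_le : ∀ t ∈ Icc a b, r t ≤ h t := by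
    refine hr.le_of_supersolution (fun t ht ↦ (hh_deriv t ht).hasDerivWithinAt)
      (fun t ht ↦ (hh'_deriv t ht).hasDerivWithinAt) (fun t ht ↦ hF _ (hh_mem t ht).1)
      (fun t ht ↦ (IccExtend_of_mem hmM (domRestrict _ F) (hh_mem t ht)).symm) (fun t ht ↦ ?_)
      (hra ▸ (le_max_left _ _).trans (hh_ge a (left_mem_Icc.2 hab.le)))
      (hrb ▸ (le_max_right _ _).trans (hh_ge b (right_mem_Icc.2 hab.le)))
    calc h'' t + f (h t) * h' t ≤ h'' t + D * h' t :=
          add_le_add le_rfl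
            (mul_le_mul_of_nonpos_right (hfD _ (hh_mem t ht).1) (hh'_nonpos t ht))
      _ < -k := hh_super t ht
      _ ≤ _ := hgk _ (hsub (projIcc m M hmM (r t)).2)
  have hr_mem : ∀ t ∈ Icc a b, r t ∈ Icc m M := fun t ht ↦
    ⟨hr_ge t ht, (hr_le t ht).trans (hh_le t ht)⟩
  exact ⟨r, p, hr.congr (fun t ht ↦ IccExtend_of_mem hmM _ (hr_mem t ht))
    (fun t ht ↦ IccExtend_of_mem hmM _ (hr_mem t ht)), hr_ge, hra, hrb⟩

end Existence

section Kepler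

variable {δ Δ r r' q q' p : ℝ → ℝ} {S : Set ℝ} {a b : ℝ}

theorem Kepler1DOn.isLienardOn (hΔ : ∀ x ∈ Ioi 0, HasDerivAt Δ (δ x) x)
    (hr : Kepler1DOn δ S r r') :
    IsLienardOn Δ (fun t ↦ -(1 / r t ^ 2)) S r (fun t ↦ r' t + Δ (r t)) :=
  (IsLienardOn.of_hasDerivWithinAt hr.2.1 hr.2.2 fun t ht ↦ hΔ _ (hr.1 t ht)).congr
    (fun _ _ ↦ rfl) fun t _ ↦ by ring

theorem IsLienardOn.kepler1DOn (hΔ : ∀ x ∈ Ioi 0, HasDerivAt Δ (δ x) x)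
    (hr : IsLienardOn Δ (fun t ↦ -(1 / r t ^ 2)) S r p) (hpos : ∀ t ∈ S, 0 < r t) :
    Kepler1DOn δ S r (fun t ↦ p t - Δ (r t)) :=
  ⟨hpos, fun t ht ↦ (hr t ht).1, fun t ht ↦
    (hr.hasDerivWithinAt_velocity (fun t ht ↦ hΔ _ (hpos t ht)) t ht).congr_deriv (by ring)⟩

theorem Kepler1DOn.le_of_le_endpoints (hδ : ContinuousOn δ (Ioi 0))
    (hr : Kepler1DOn δ (Icc a b) r r') (hq : Kepler1DOn δ (Icc a b) q q')
    (ha : r a ≤ q a) (hb : r b ≤ q b) : ∀ t ∈ Icc a b, r t ≤ q t := by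
  obtain ⟨Δ, hΔ⟩ := exists_hasDerivAt_of_continuousOn_Ioi hδ
  refine (hr.isLienardOn hΔ).le_of_forcing_lt (hq.isLienardOn hΔ) (fun t ht hlt ↦ ?_) ha hb
  have hq_pos := hq.1 t ht
  have : 1 / r t ^ 2 < 1 / q t ^ 2 := by gcongr
  exact neg_lt_neg this

theorem exists_kepler1DOn_boundary (hδ : ContinuousOn δ (Ioi 0)) (hδ_bdd : BddBelow (δ '' Ioi 0))
    (hab : a < b) {rA rB : ℝ} (hrA : 0 < rA) (hrB : 0 < rB) :
    ∃ r r' : ℝ → ℝ, Kepler1DOn δ (Icc a b) r r' ∧ r a = rA ∧ r b = rB := by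
  obtain ⟨D, hD⟩ := hδ_bdd
  obtain ⟨Δ, hΔ⟩ := exists_hasDerivAt_of_continuousOn_Ioi hδ
  set m := min rA rB
  have hm : 0 < m := lt_min hrA hrB
  have hpos : Ici m ⊆ Ioi 0 := fun x hx ↦ hm.trans_le hx
  have hforce_deriv : ∀ x ∈ Ici m, HasDerivAt (fun x : ℝ ↦ -(1 / x ^ 2)) (2 / x ^ 3) x :=
    fun x hx ↦ by
      have hx0 : x ≠ 0 := (hpos hx).ne'
      simp only [one_div]
      refine ((hasDerivAt_pow 2 x).fun_inv (pow_ne_zero 2 hx0)).neg.congr_deriv ?_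
      field_simp
      ring
  have hforce_deriv_cont : ContinuousOn (fun x : ℝ ↦ 2 / x ^ 3) (Ici m) :=
    continuousOn_const.div (continuousOn_pow 3) fun x hx ↦ pow_ne_zero 3 (hpos hx).ne'
  obtain ⟨r, p, hr, hr_ge, hra, hrb⟩ := exists_isLienardOn_boundary_of_forcing_neg
    (k := 1 / m ^ 2) (fun x hx ↦ hΔ x (hpos hx)) (hδ.mono hpos)
    (fun x hx ↦ hD (mem_image_of_mem δ (hpos hx))) hforce_deriv hforce_deriv_cont
    (fun x hx ↦ neg_lt_zero.2 (one_div_pos.2 (pow_pos (hpos hx) 2)))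
    (fun x hx ↦ neg_le_neg (one_div_le_one_div_of_le (pow_pos hm 2) (pow_le_pow_left₀ hm.le hx 2)))
    hab (min_le_left rA rB) (min_le_right rA rB)
  exact ⟨r, _, hr.kepler1DOn hΔ fun t ht ↦ hpos (hr_ge t ht), hra, hrb⟩

theorem stmt7_general (hδ : ContinuousOn δ (Ioi 0)) (hδ_bdd : BddBelow (δ '' Ioi 0))
    (hab : a < b) {rA rB : ℝ} (hrA : 0 < rA) (hrB : 0 < rB) :
    (∃ r r' : ℝ → ℝ, Kepler1DOn δ (Icc a b) r r' ∧ r a = rA ∧ r b = rB) ∧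
    (∀ r r' q q' : ℝ → ℝ,
      Kepler1DOn δ (Icc a b) r r' → Kepler1DOn δ (Icc a b) q q' →
      r a = rA → r b = rB → q a = rA → q b = rB →
      ∀ t ∈ Icc a b, r t = q t) := by
  refine ⟨exists_kepler1DOn_boundary hδ hδ_bdd hab hrA hrB, ?_⟩
  intro r r' q q' hr hq hra hrb hqa hqb t ht
  have ha : r a = q a := hra.trans hqa.symm
  have hb : r b = q b := hrb.trans hqb.symm
  exact le_antisymm (hr.le_of_le_endpoints hδ hq ha.le hb.le t ht)
    (hq.le_of_le_endpoints hδ hr ha.ge hb.ge t ht)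

end Kepler

/-- Existence and uniqueness for the rectilinear Lambert problem with friction:
for every `r_A, r_B, T > 0` there is a unique solution of `r̈ + δ(r)ṙ = -1/r²`
on `[-T,0]` with `r(-T) = r_A` and `r(0) = r_B`. -/
theorem stmt7 (δ δ' : ℝ → ℝ)
    (hδd : ∀ r > (0 : ℝ), HasDerivAt δ (δ' r) r) (hδ'c : ContinuousOn δ' (Ioi 0))
    (hδ0 : ∀ r > (0 : ℝ), 0 ≤ δ r) (Dstar : ℝ) (hδb : ∀ r > (0 : ℝ), δ r ≤ Dstar)
    (rA rB T : ℝ) (hrA : 0 < rA) (hrB : 0 < rB) (hT : 0 < T) :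
    (∃ r r' : ℝ → ℝ, Kepler1DOn δ (Icc (-T) 0) r r' ∧ r (-T) = rA ∧ r 0 = rB) ∧
    (∀ r r' q q' : ℝ → ℝ,
      Kepler1DOn δ (Icc (-T) 0) r r' → Kepler1DOn δ (Icc (-T) 0) q q' →
      r (-T) = rA → r 0 = rB → q (-T) = rA → q 0 = rB →
      ∀ t ∈ Icc (-T) 0, r t = q t) := by
  exact stmt7_general (fun r hr ↦ (hδd r hr).continuousAt.continuousWithinAt)
    ⟨0, forall_mem_image.2 hδ0⟩ (neg_lt_zero.2 hT) hrA hrB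
end

section
/- Let δ : ]0,∞[ → ℝ be continuous, nonnegative and bounded, and let r : ]α,ω[ → ]0,∞[ be a maximal solution of r̈ + δ(r)ṙ = -1/r² with α > -∞. Then lim_{t→α⁺} r(t) = 0. -/
open Set Filter

/-!
In the Liénard coordinates `(x, w)` with `w = ẋ + F(x)`, `F' = f`, the equation
`ẍ + f(x)ẋ + g(x) = 0` becomes the `C¹` system `ẋ = w - F(x)`, `ẇ = -g(x)`. If `x` has a limit
inside the domain as `t → α⁺`, then `ẇ` is bounded near `α`, so `w` converges as well and the
solution extends to the left of `α`. On a left-maximal solution the limit can therefore only be the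
endpoint of the domain.

The limit exists because `exp(∫ f(x)) ẋ` is nonincreasing when `0 ≤ g`. Hence either `0 ≤ ẋ` near
`α`, and `x` is monotone and bounded below there, or `ẋ < 0` throughout. In the second case `x`
stays away from the endpoint near `α`, so `f(x)` is bounded above there and the same monotonicity
bounds `ẋ` from below.
-/

open Topology Asymptotics

theorem antitoneOn_of_hasDerivAt_nonpos {s : Set ℝ} (hs : Convex ℝ s) {f f' : ℝ → ℝ}
    (hf : ∀ t ∈ s, HasDerivAt f (f' t) t) (hf' : ∀ t ∈ s, f' t ≤ 0) : AntitoneOn f s :=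
  antitoneOn_of_hasDerivWithinAt_nonpos hs (HasDerivAt.continuousOn hf)
    (fun t ht ↦ (hf t (interior_subset ht)).hasDerivWithinAt)
    fun t ht ↦ hf' t (interior_subset ht)

theorem exists_hasDerivAt_of_continuousOn {E : Type*} [NormedAddCommGroup E] [NormedSpace ℝ E]
    [CompleteSpace E] {s : Set ℝ} (hs : IsOpen s) (hs' : s.OrdConnected) {f : ℝ → E}
    (hf : ContinuousOn f s) : ∃ F : ℝ → E, ∀ t ∈ s, HasDerivAt F (f t) t := by
  rcases s.eq_empty_or_nonempty with rfl | ⟨a, ha⟩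
  · exact ⟨0, fun t ht ↦ ht.elim⟩
  refine ⟨fun t ↦ ∫ u in a..t, f u, fun t ht ↦ ?_⟩
  exact intervalIntegral.integral_hasDerivAt_right
    (hf.mono (hs'.uIcc_subset ha ht)).intervalIntegrable
    (hf.stronglyMeasurableAtFilter hs t ht) (hf.continuousAt (hs.mem_nhds ht))

theorem contDiffOn_one_of_hasDerivAt {E : Type*} [NormedAddCommGroup E] [NormedSpace ℝ E]
    {s : Set ℝ} (hs : IsOpen s) {F f : ℝ → E} (hF : ∀ t ∈ s, HasDerivAt F (f t) t)
    (hf : ContinuousOn f s) : ContDiffOn ℝ 1 F s := by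
  rw [contDiffOn_one_iff_derivWithin hs.uniqueDiffOn]
  refine ⟨fun t ht ↦ (hF t ht).differentiableAt.differentiableWithinAt, hf.congr fun t ht ↦ ?_⟩
  rw [derivWithin_of_isOpen hs ht, (hF t ht).deriv]

theorem exists_tendsto_nhdsGT_of_isBigO_deriv {a : ℝ} {f f' : ℝ → ℝ}
    (hf : ∀ᶠ t in 𝓝[>] a, HasDerivAt f (f' t) t) (hf' : f' =O[𝓝[>] a] (1 : ℝ → ℝ)) :
    ∃ L, Tendsto f (𝓝[>] a) (𝓝 L) := by
  obtain ⟨C, hC⟩ := hf'.bound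
  obtain ⟨b, hab, hb⟩ := mem_nhdsGT_iff_exists_Ioo_subset.1 (hf.and hC)
  have hlip : LipschitzOnWith C.toNNReal f (Ioo a b) :=
    (convex_Ioo a b).lipschitzOnWith_of_nnnorm_hasDerivWithin_le
      (fun t ht ↦ (hb ht).1.hasDerivWithinAt) fun t ht ↦ by
        rw [← NNReal.coe_le_coe, coe_nnnorm]
        exact ((hb ht).2.trans_eq (by simp)).trans (Real.le_coe_toNNReal C)
  obtain ⟨e, he, hfe⟩ := hlip.extend_real
  exact ⟨e a, (he.continuous.continuousWithinAt.tendsto).congr'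
    (hfe.symm.eventuallyEq_of_mem (Ioo_mem_nhdsGT hab))⟩

theorem bddAbove_image_Ici_of_isBoundedUnder_atTop {f : ℝ → ℝ} {a : ℝ}
    (hf : ContinuousOn f (Ici a)) (hf' : IsBoundedUnder (· ≤ ·) atTop f) :
    BddAbove (f '' Ici a) := by
  obtain ⟨D, hD⟩ := hf'
  obtain ⟨R, hR⟩ := eventually_atTop.1 (eventually_map.1 hD)
  have hcompact : BddAbove (f '' Icc a R) :=
    isCompact_Icc.bddAbove_image (hf.mono Icc_subset_Ici_self)
  have htail : BddAbove (f '' Ici R) := ⟨D, forall_mem_image.2 hR⟩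
  refine (hcompact.union htail).mono ?_
  rw [← image_union]
  refine image_mono fun t ht ↦ ?_
  exact (le_total t R).imp (fun h ↦ ⟨ht, h⟩) id

section Gluing

variable {E : Type*} [NormedAddCommGroup E] [NormedSpace ℝ E]

theorem hasDerivAt_ite_le {f g g' : ℝ → E} {a : ℝ} {e : E} (hf : HasDerivWithinAt f e (Iic a) a)
    (hg : ∀ᶠ t in 𝓝[>] a, HasDerivAt g (g' t) t) (hga : Tendsto g (𝓝[>] a) (𝓝 (f a)))
    (hg'a : Tendsto g' (𝓝[>] a) (𝓝 e)) :
    HasDerivAt (fun t ↦ if t ≤ a then f t else g t) e a := by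
  set z : ℝ → E := fun t ↦ if t ≤ a then f t else g t
  have hzf : EqOn z f (Iic a) := fun t ht ↦ if_pos ht
  have hzg : EqOn z g (Ioi a) := fun t ht ↦ if_neg (not_le.2 ht)
  have hz : ∀ᶠ t in 𝓝[>] a, HasDerivAt z (g' t) t := by
    filter_upwards [hg, self_mem_nhdsWithin] with t ht hat
    exact ht.congr_of_eventuallyEq (hzg.eventuallyEq_of_mem (Ioi_mem_nhds hat))
  have hleft : HasDerivWithinAt z e (Iic a) a := hf.congr hzf (hzf self_mem_Iic)
  have hright : HasDerivWithinAt z e (Ici a) a := by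
    have hza : ContinuousWithinAt z (Ioi a) a := by
      rw [ContinuousWithinAt, hzf self_mem_Iic]
      exact hga.congr' (hzg.symm.eventuallyEq_of_mem self_mem_nhdsWithin)
    refine hasDerivWithinAt_Ici_of_tendsto_deriv
      (fun t ht ↦ ht.1.differentiableAt.differentiableWithinAt)
      (hza.mono inter_subset_right) (inter_mem hz self_mem_nhdsWithin)
      (hg'a.congr' (hz.mono fun t ht ↦ ht.deriv.symm))
  simpa only [Iic_union_Ici, hasDerivWithinAt_univ] using hleft.union hright

theorem exists_left_extension_of_tendsto [CompleteSpace E] {X : E → E} {y : ℝ → E} {p : E}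
    {U : Set E} {α ω : ℝ} (hX : ContDiffAt ℝ 1 X p) (hU : U ∈ 𝓝 p) (hαω : α < ω)
    (hy : ∀ t ∈ Ioo α ω, HasDerivAt y (X (y t)) t) (hyU : MapsTo y (Ioo α ω) U)
    (hyp : Tendsto y (𝓝[>] α) (𝓝 p)) :
    ∃ a' < α, ∃ z : ℝ → E, (∀ t ∈ Ioo a' ω, HasDerivAt z (X (z t)) t) ∧
      MapsTo z (Ioo a' ω) U ∧ EqOn z y (Ioo α ω) := by
  obtain ⟨u, rfl, ε, hε, hu⟩ :=
    hX.exists_forall_mem_closedBall_exists_eq_forall_mem_Ioo_hasDerivAt₀ α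
  have huα : HasDerivAt u (X (u α)) α := hu α ⟨by linarith, by linarith⟩
  obtain ⟨a', ha', hua'⟩ : ∃ a' < α, ∀ t ∈ Ioc a' α, HasDerivAt u (X (u t)) t ∧ u t ∈ U := by
    have hev : ∀ᶠ t in 𝓝 α, HasDerivAt u (X (u t)) t ∧ u t ∈ U :=
      (eventually_of_mem (Ioo_mem_nhds (by linarith) (by linarith)) hu).and
        (huα.continuousAt.eventually_mem hU)
    exact (mem_nhdsLE_iff_exists_Ioc_subset).1 (hev.filter_mono nhdsWithin_le_nhds)
  set z : ℝ → E := fun t ↦ if t ≤ α then u t else y t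
  have hzu : EqOn z u (Iic α) := fun t ht ↦ if_pos ht
  have hzy : EqOn z y (Ioi α) := fun t ht ↦ if_neg (not_le.2 ht)
  refine ⟨a', ha', z, fun t ht ↦ ?_, fun t ht ↦ ?_, hzy.mono Ioo_subset_Ioi_self⟩
  · rcases lt_trichotomy t α with htα | rfl | htα
    · rw [hzu htα.le]
      exact (hua' t ⟨ht.1, htα.le⟩).1.congr_of_eventuallyEq
        (hzu.eventuallyEq_of_mem (Iic_mem_nhds htα))
    · rw [hzu self_mem_Iic]
      exact hasDerivAt_ite_le huα.hasDerivWithinAt (eventually_of_mem (Ioo_mem_nhdsGT hαω) hy)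
        hyp (hX.continuousAt.tendsto.comp hyp)
    · rw [hzy htα]
      exact (hy t ⟨htα, ht.2⟩).congr_of_eventuallyEq
        (hzy.eventuallyEq_of_mem (Ioi_mem_nhds htα))
  · rcases le_or_gt t α with htα | htα
    · rw [hzu htα]
      exact (hua' t ⟨ht.1, htα⟩).2
    · rw [hzy htα]
      exact hyU ⟨htα, ht.2⟩

end Gluing

/-- Solutions on the times `S`, with values in `U` and velocity `v`, of the Liénard equation
`ẍ + f(x)ẋ + g(x) = 0`, of which the damped Kepler equation is the case `g(x) = 1/x²`. The
derivatives are two-sided, so `S` is meant to be open. -/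
structure LienardOn (f g : ℝ → ℝ) (U S : Set ℝ) (x v : ℝ → ℝ) : Prop where
  mapsTo : MapsTo x S U
  hasDerivAt_position : ∀ t ∈ S, HasDerivAt x (v t) t
  hasDerivAt_velocity : ∀ t ∈ S, HasDerivAt v (-f (x t) * v t - g (x t)) t

/-- The vector field `(x, w) ↦ (w - F x, -g x)` on the Liénard plane, to which the Liénard equation
`ẍ + F'(x)ẋ + g(x) = 0` is conjugate through `w = ẋ + F(x)`. Its point is that it is `C¹` as soon as
`F'` is continuous and `g` is `C¹`. -/
def lienardField (F g : ℝ → ℝ) (z : ℝ × ℝ) : ℝ × ℝ :=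
  (z.2 - F z.1, -g z.1)

theorem contDiffAt_lienardField {F g : ℝ → ℝ} {n : WithTop ℕ∞} {z : ℝ × ℝ}
    (hF : ContDiffAt ℝ n F z.1) (hg : ContDiffAt ℝ n g z.1) :
    ContDiffAt ℝ n (lienardField F g) z :=
  (contDiffAt_snd.sub (hF.comp z contDiffAt_fst)).prodMk (hg.comp z contDiffAt_fst).neg

theorem lienardOn_of_hasDerivAt_lienardField {f g F : ℝ → ℝ} {U S : Set ℝ} {z : ℝ → ℝ × ℝ}
    (hF : ∀ s ∈ U, HasDerivAt F (f s) s) (hzU : MapsTo (fun t ↦ (z t).1) S U)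
    (hz : ∀ t ∈ S, HasDerivAt z (lienardField F g (z t)) t) :
    LienardOn f g U S (fun t ↦ (z t).1) (fun t ↦ (z t).2 - F (z t).1) where
  mapsTo := hzU
  hasDerivAt_position t ht := (hz t ht).fst
  hasDerivAt_velocity t ht := by
    have hFz : HasDerivAt (fun t ↦ F (z t).1) (f (z t).1 * ((z t).2 - F (z t).1)) t :=
      (hF _ (hzU ht)).comp t (hz t ht).fst
    have hw : HasDerivAt (fun t ↦ (z t).2) (-g (z t).1) t := (hz t ht).snd
    exact (hw.sub hFz).congr_deriv (by ring)

namespace LienardOn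

variable {f g x v : ℝ → ℝ} {U S : Set ℝ} {α ω c : ℝ}

theorem mono {S' : Set ℝ} (h : LienardOn f g U S x v) (hS : S' ⊆ S) : LienardOn f g U S' x v where
  mapsTo := h.mapsTo.mono_left hS
  hasDerivAt_position t ht := h.hasDerivAt_position t (hS ht)
  hasDerivAt_velocity t ht := h.hasDerivAt_velocity t (hS ht)

theorem hasDerivAt_lienardField {F : ℝ → ℝ} (h : LienardOn f g U S x v)
    (hF : ∀ s ∈ U, HasDerivAt F (f s) s) {t : ℝ} (ht : t ∈ S) :
    HasDerivAt (fun t ↦ (x t, v t + F (x t))) (lienardField F g (x t, v t + F (x t))) t := by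
  have hFx : HasDerivAt (fun t ↦ F (x t)) (f (x t) * v t) t :=
    (hF _ (h.mapsTo ht)).comp t (h.hasDerivAt_position t ht)
  refine ((h.hasDerivAt_position t ht).prodMk ((h.hasDerivAt_velocity t ht).add hFx)).congr_deriv ?_
  simp only [lienardField, Prod.mk.injEq]
  constructor <;> ring

theorem exists_left_extension (h : LienardOn f g U (Ioo α ω) x v) (hU : IsOpen U)
    (hU' : U.OrdConnected) (hf : ContinuousOn f U) (hg : ContDiffOn ℝ 1 g U) (hαω : α < ω) {L : ℝ}
    (hL : L ∈ U) (hx : Tendsto x (𝓝[>] α) (𝓝 L)) :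
    ∃ a' < α, ∃ q q' : ℝ → ℝ, LienardOn f g U (Ioo a' ω) q q' ∧ EqOn q x (Ioo α ω) := by
  obtain ⟨F, hF⟩ := exists_hasDerivAt_of_continuousOn hU hU' hf
  have hLU : U ∈ 𝓝 L := hU.mem_nhds hL
  have hgL : ContDiffAt ℝ 1 g L := hg.contDiffAt hLU
  have hplane : ∀ t ∈ Ioo α ω,
      HasDerivAt (fun t ↦ (x t, v t + F (x t))) (lienardField F g (x t, v t + F (x t))) t :=
    fun _ ht ↦ h.hasDerivAt_lienardField hF ht
  obtain ⟨W, hW⟩ : ∃ W, Tendsto (fun t ↦ v t + F (x t)) (𝓝[>] α) (𝓝 W) :=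
    exists_tendsto_nhdsGT_of_isBigO_deriv
      (eventually_of_mem (Ioo_mem_nhdsGT hαω) fun t ht ↦ (hplane t ht).snd)
      ((hgL.continuousAt.tendsto.comp hx).neg.isBigO_one ℝ)
  have hfield : ContDiffAt ℝ 1 (lienardField F g) (L, W) :=
    contDiffAt_lienardField ((contDiffOn_one_of_hasDerivAt hU hF hf).contDiffAt hLU) hgL
  obtain ⟨a', ha', z, hz, hzU, hzx⟩ := exists_left_extension_of_tendsto hfield
    (continuous_fst.continuousAt.preimage_mem_nhds hLU) hαω hplane h.mapsTo (hx.prodMk_nhds hW)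
  exact ⟨a', ha', _, _, lienardOn_of_hasDerivAt_lienardField hF hzU hz,
    fun t ht ↦ congrArg Prod.fst (hzx ht)⟩

theorem exists_antitoneOn_exp_mul_vel (h : LienardOn f g U (Ioo α ω) x v) (hf : ContinuousOn f U)
    (hg : ∀ s ∈ U, 0 ≤ g s) :
    ∃ E : ℝ → ℝ, (∀ t ∈ Ioo α ω, HasDerivAt E (f (x t)) t) ∧
      AntitoneOn (fun t ↦ Real.exp (E t) * v t) (Ioo α ω) := by
  obtain ⟨E, hE⟩ := exists_hasDerivAt_of_continuousOn isOpen_Ioo ordConnected_Ioo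
    (hf.comp (HasDerivAt.continuousOn h.hasDerivAt_position) h.mapsTo)
  refine ⟨E, hE, antitoneOn_of_hasDerivAt_nonpos (f' := fun t ↦ -(Real.exp (E t) * g (x t)))
    (convex_Ioo α ω) (fun t ht ↦ ?_) fun t ht ↦ ?_⟩
  · exact ((hE t ht).exp.mul (h.hasDerivAt_velocity t ht)).congr_deriv
      (by simp only [Function.comp_apply]; ring)
  · exact neg_nonpos.2 (mul_nonneg (Real.exp_pos _).le (hg _ (h.mapsTo ht)))

theorem vel_nonneg_of_le (h : LienardOn f g U (Ioo α ω) x v) (hf : ContinuousOn f U)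
    (hg : ∀ s ∈ U, 0 ≤ g s) {s t : ℝ} (hs : s ∈ Ioo α ω) (ht : t ∈ Ioo α ω) (hst : s ≤ t)
    (hvt : 0 ≤ v t) : 0 ≤ v s := by
  obtain ⟨E, -, hE⟩ := h.exists_antitoneOn_exp_mul_vel hf hg
  have hle : Real.exp (E t) * v t ≤ Real.exp (E s) * v s := hE hs ht hst
  exact nonneg_of_mul_nonneg_right ((mul_nonneg (Real.exp_pos _).le hvt).trans hle)
    (Real.exp_pos _)

theorem exp_mul_vel_le (h : LienardOn f g U (Ioo α ω) x v) (hf : ContinuousOn f U)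
    (hg : ∀ s ∈ U, 0 ≤ g s) {D : ℝ} (hD : ∀ t ∈ Ioo α ω, f (x t) ≤ D) {s t : ℝ}
    (hs : s ∈ Ioo α ω) (ht : t ∈ Ioo α ω) (hst : s ≤ t) (hvt : v t ≤ 0) :
    Real.exp (D * (t - s)) * v t ≤ v s := by
  obtain ⟨E, hE, hanti⟩ := h.exists_antitoneOn_exp_mul_vel hf hg
  have hEst : E t - E s ≤ D * (t - s) := by
    have hEanti : AntitoneOn (fun t ↦ E t - D * t) (Ioo α ω) :=
      antitoneOn_of_hasDerivAt_nonpos (convex_Ioo α ω)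
        (fun t ht ↦ (hE t ht).sub ((hasDerivAt_id t).const_mul D))
        fun t ht ↦ by linarith [hD t ht]
    have hle : E t - D * t ≤ E s - D * s := hEanti hs ht hst
    linarith
  calc Real.exp (D * (t - s)) * v t
      ≤ Real.exp (E t - E s) * v t :=
        mul_le_mul_of_nonpos_right (Real.exp_le_exp.2 hEst) hvt
    _ = (Real.exp (E s))⁻¹ * (Real.exp (E t) * v t) := by rw [Real.exp_sub]; ring
    _ ≤ (Real.exp (E s))⁻¹ * (Real.exp (E s) * v s) :=
        mul_le_mul_of_nonneg_left (hanti hs ht hst) (inv_nonneg.2 (Real.exp_pos _).le)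
    _ = v s := inv_mul_cancel_left₀ (Real.exp_ne_zero _) _

theorem exists_tendsto_of_vel_nonneg (h : LienardOn f g U (Ioo α ω) x v) (hU : BddBelow U)
    (hαω : α < ω) (hv : ∀ t ∈ Ioo α ω, 0 ≤ v t) : ∃ L, Tendsto x (𝓝[>] α) (𝓝 L) := by
  have hmono : MonotoneOn x (Ioo α ω) :=
    monotoneOn_of_hasDerivWithinAt_nonneg (convex_Ioo α ω)
      (HasDerivAt.continuousOn h.hasDerivAt_position)
      (fun t ht ↦ (h.hasDerivAt_position t (interior_subset ht)).hasDerivWithinAt)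
      fun t ht ↦ hv t (interior_subset ht)
  exact ⟨_, hmono.tendsto_nhdsWithin_Ioo_right (nonempty_Ioo.2 hαω)
    (hU.mono h.mapsTo.image_subset)⟩

theorem exists_tendsto_of_vel_nonpos (h : LienardOn f g U (Ioo α ω) x v) (hf : ContinuousOn f U)
    (hg : ∀ s ∈ U, 0 ≤ g s) (hαω : α < ω) {D : ℝ} (hD : ∀ t ∈ Ioo α ω, f (x t) ≤ D)
    (hv : ∀ t ∈ Ioo α ω, v t ≤ 0) : ∃ L, Tendsto x (𝓝[>] α) (𝓝 L) := by
  obtain ⟨t₀, ht₀⟩ := nonempty_Ioo.2 hαω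
  have hvO : v =O[𝓝[>] α] fun t ↦ Real.exp (D * (t₀ - t)) * v t₀ := by
    refine .of_bound' (eventually_of_mem (Ioo_mem_nhdsGT ht₀.1) fun t ht ↦ ?_)
    have htω : t ∈ Ioo α ω := ⟨ht.1, ht.2.trans ht₀.2⟩
    have hle := h.exp_mul_vel_le hf hg hD htω ht₀ ht.2.le (hv t₀ ht₀)
    simpa only [Real.norm_eq_abs] using abs_le_abs_of_nonpos (hv t htω) hle
  have hcont : Continuous fun t ↦ Real.exp (D * (t₀ - t)) * v t₀ := by fun_prop
  exact exists_tendsto_nhdsGT_of_isBigO_deriv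
    (eventually_of_mem (Ioo_mem_nhdsGT hαω) h.hasDerivAt_position)
    (hvO.trans (hcont.continuousWithinAt.tendsto.isBigO_one ℝ))

theorem exists_forall_damping_le_of_vel_nonpos (h : LienardOn f g (Ioi c) (Ioo α ω) x v)
    (hf : ContinuousOn f (Ioi c)) (hf' : IsBoundedUnder (· ≤ ·) atTop f)
    (hv : ∀ t ∈ Ioo α ω, v t ≤ 0) {t₀ : ℝ} (ht₀ : t₀ ∈ Ioo α ω) :
    ∃ D, ∀ t ∈ Ioo α t₀, f (x t) ≤ D := by
  have hanti : AntitoneOn x (Ioo α ω) :=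
    antitoneOn_of_hasDerivAt_nonpos (convex_Ioo α ω) h.hasDerivAt_position hv
  obtain ⟨D, hD⟩ := bddAbove_image_Ici_of_isBoundedUnder_atTop
    (hf.mono (Ici_subset_Ioi.2 (h.mapsTo ht₀))) hf'
  exact ⟨D, fun t ht ↦
    hD (mem_image_of_mem f (hanti ⟨ht.1, ht.2.trans ht₀.2⟩ ht₀ ht.2.le))⟩

theorem exists_tendsto (h : LienardOn f g (Ioi c) (Ioo α ω) x v) (hf : ContinuousOn f (Ioi c))
    (hf' : IsBoundedUnder (· ≤ ·) atTop f) (hg : ∀ s > c, 0 ≤ g s) (hαω : α < ω) :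
    ∃ L, Tendsto x (𝓝[>] α) (𝓝 L) := by
  by_cases! hv : ∃ t₀ ∈ Ioo α ω, 0 ≤ v t₀
  · obtain ⟨t₀, ht₀, hvt₀⟩ := hv
    have hsub : Ioo α t₀ ⊆ Ioo α ω := Ioo_subset_Ioo_right ht₀.2.le
    exact (h.mono hsub).exists_tendsto_of_vel_nonneg bddBelow_Ioi ht₀.1
      fun t ht ↦ h.vel_nonneg_of_le hf hg (hsub ht) ht₀ ht.2.le hvt₀
  · have hv' : ∀ t ∈ Ioo α ω, v t ≤ 0 := fun t ht ↦ (hv t ht).le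
    obtain ⟨t₀, ht₀⟩ := nonempty_Ioo.2 hαω
    have hsub : Ioo α t₀ ⊆ Ioo α ω := Ioo_subset_Ioo_right ht₀.2.le
    obtain ⟨D, hD⟩ := h.exists_forall_damping_le_of_vel_nonpos hf hf' hv' ht₀
    exact (h.mono hsub).exists_tendsto_of_vel_nonpos hf hg ht₀.1 hD fun t ht ↦ hv' t (hsub ht)

end LienardOn

theorem kepler1DOn_iff_lienardOn {δ r r' : ℝ → ℝ} {S : Set ℝ} (hS : IsOpen S) :
    Kepler1DOn δ S r r' ↔ LienardOn δ (fun s ↦ 1 / s ^ 2) (Ioi 0) S r r' := by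
  have hwithin : ∀ y y' : ℝ → ℝ, (∀ t ∈ S, HasDerivWithinAt y (y' t) S t) ↔
      ∀ t ∈ S, HasDerivAt y (y' t) t := fun y y' ↦
    forall₂_congr fun t ht ↦
      ⟨fun h ↦ h.hasDerivAt (hS.mem_nhds ht), fun h ↦ h.hasDerivWithinAt⟩
  rw [Kepler1DOn, hwithin, hwithin]
  exact ⟨fun h ↦ ⟨h.1, h.2.1, h.2.2⟩, fun h ↦ ⟨h.1, h.2, h.3⟩⟩

theorem stmt12_general {f g x v : ℝ → ℝ} {c α ω : ℝ} (hf : ContinuousOn f (Ioi c))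
    (hf' : IsBoundedUnder (· ≤ ·) atTop f) (hg : ContDiffOn ℝ 1 g (Ioi c))
    (hg0 : ∀ s > c, 0 ≤ g s) (hαω : α < ω) (hsol : LienardOn f g (Ioi c) (Ioo α ω) x v)
    (hmax : ¬∃ a' < α, ∃ q q' : ℝ → ℝ,
      LienardOn f g (Ioi c) (Ioo a' ω) q q' ∧ EqOn q x (Ioo α ω)) :
    Tendsto x (𝓝[>] α) (𝓝 c) := by
  obtain ⟨L, hL⟩ := hsol.exists_tendsto hf hf' hg0 hαω
  have hcL : c ≤ L :=
    ge_of_tendsto hL (eventually_of_mem (Ioo_mem_nhdsGT hαω) fun t ht ↦ (hsol.mapsTo ht).le)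
  obtain rfl | hcL := hcL.eq_or_lt
  · exact hL
  · exact (hmax (hsol.exists_left_extension isOpen_Ioi ordConnected_Ioi hf hg hαω hcL hL)).elim

/-- If a maximal solution of the 1D damped Kepler equation on `]α,ω[` has `α > -∞`,
then `r(t) → 0` as `t → α⁺`. -/
theorem stmt12 (δ : ℝ → ℝ) (hδc : ContinuousOn δ (Ioi 0))
    (hδ0 : ∀ s > (0 : ℝ), 0 ≤ δ s) (Dstar : ℝ) (hδb : ∀ s > (0 : ℝ), δ s ≤ Dstar)
    (α ω : ℝ) (hαω : α < ω)
    (r r' : ℝ → ℝ) (hsol : Kepler1DOn δ (Ioo α ω) r r')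
    (hmax : ¬∃ (a' b' : ℝ) (q q' : ℝ → ℝ), a' ≤ α ∧ ω ≤ b' ∧ (a' < α ∨ ω < b') ∧
      Kepler1DOn δ (Ioo a' b') q q' ∧ ∀ t ∈ Ioo α ω, q t = r t) :
    Tendsto r (nhdsWithin α (Ioi α)) (nhds 0) :=
  stmt12_general hδc (isBoundedUnder_of_eventually_le ((eventually_gt_atTop 0).mono hδb))
    (contDiffOn_const.div (contDiffOn_id.pow 2) fun _ hs ↦ (pow_pos hs 2).ne')
    (fun s _ ↦ one_div_nonneg.2 (sq_nonneg s)) hαω ((kepler1DOn_iff_lienardOn isOpen_Ioo).1 hsol)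
    fun ⟨a', ha', q, q', hq, hqr⟩ ↦ hmax ⟨a', ω, q, q', ha'.le, le_rfl, .inl ha',
      (kepler1DOn_iff_lienardOn isOpen_Ioo).2 hq, hqr⟩
end
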